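/- arXiv:1104.0915 — 2 statements merged into one kernel-verified Lean document; each statement's English description precedes it below -/
import Mathlib

section
/- Let α ∈ (1/2, 1), c > 0, and let (t_k) be a strictly increasing real sequence with t_{k+1} - t_k ≥ c·k^{α-1} for all k ≥ 1. Then there is a constant C̃ > 0 depending only on α and c such that for every (b_m) ∈ ℓ²(ℕ), Σ_{n=1}^∞ |Σ_{m≠n} m^{α-1} b_m/(t_m - t_n)|² ≤ C̃ · Σ_m |b_m|². -/
section WeightedHilbert

open Finset

theorem sum_inv_sub_mul_inv_sub {ι : Type*} [Fintype ι] [DecidableEq ι] {t : ι → ℝ}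
    (ht : Function.Injective t) (m l : ι) :
    ∑ n, (t m - t n)⁻¹ * (t l - t n)⁻¹ =
      (t l - t m)⁻¹ * (∑ n, (t m - t n)⁻¹ - ∑ n, (t l - t n)⁻¹) + 2 * ((t l - t m)⁻¹) ^ 2
        + if m = l then ∑ n, ((t m - t n)⁻¹) ^ 2 else 0 := by
  by_cases hml : m = l
  · subst hml
    simp [sq]
  have key : ∀ n, (t m - t n)⁻¹ * (t l - t n)⁻¹ =
      (t l - t m)⁻¹ * ((t m - t n)⁻¹ - (t l - t n)⁻¹)
        + ((if n = m then ((t l - t m)⁻¹) ^ 2 else 0)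
          + (if n = l then ((t l - t m)⁻¹) ^ 2 else 0)) := by
    intro n
    by_cases h1 : n = m
    · subst h1
      simp only [sub_self, inv_zero, if_neg hml, if_true]
      generalize (t l - t n)⁻¹ = q
      ring
    by_cases h2 : n = l
    · subst h2
      have : (t m - t n)⁻¹ = -(t n - t m)⁻¹ := by rw [← neg_sub, inv_neg]
      simp only [sub_self, inv_zero, if_neg h1, if_true, this]
      generalize (t n - t m)⁻¹ = q
      ring
    have e1 : t m - t n ≠ 0 := sub_ne_zero.2 fun h => h1 (ht h).symm
    have e2 : t l - t n ≠ 0 := sub_ne_zero.2 fun h => h2 (ht h).symm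
    have e3 : t l - t m ≠ 0 := sub_ne_zero.2 fun h => hml (ht h).symm
    simp only [h1, h2, if_false]
    field_simp
    ring
  rw [Finset.sum_congr rfl fun n _ => key n]
  simp only [sum_add_distrib, ← mul_sum, sum_sub_distrib, sum_ite_eq', mem_univ, if_true, hml,
    if_false]
  ring

/-- An eigenvalue of the Hermitian matrix `i / (t m - t n)` has square at most `3 * D`. -/
theorem hilbert_eigenvector_bound {ι : Type*} [Fintype ι] {t : ι → ℝ}
    (ht : Function.Injective t) {D : ℝ} (hD : ∀ m, ∑ n, ((t m - t n)⁻¹) ^ 2 ≤ D)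
    {x : ι → ℂ} {μ : ℝ}
    (hx : ∀ n, ∑ m, x m * (((t m - t n)⁻¹ : ℝ) : ℂ) = -(Complex.I * μ * x n)) :
    μ ^ 2 * ∑ n, ‖x n‖ ^ 2 ≤ 3 * D * ∑ n, ‖x n‖ ^ 2 := by
  classical
  set r : ι → ι → ℝ := fun m n => (t m - t n)⁻¹ with hr
  set s : ι → ℝ := fun m => ∑ n, r m n with hs
  have hanti : ∀ m n, r m n = -r n m := fun m n => by simp only [hr]; rw [← neg_sub, inv_neg]
  have hx' : ∀ n, ∑ m, x m * (r m n : ℂ) = -(Complex.I * μ * x n) := hx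
  have hconj : ∀ n, ∑ l, (starRingEnd ℂ) (x l) * (r l n : ℂ)
      = Complex.I * μ * (starRingEnd ℂ) (x n) := by
    intro n
    have := congrArg (starRingEnd ℂ) (hx' n)
    simpa [map_sum] using this
  have hmain : ∑ n, (∑ m, x m * (r m n : ℂ)) * (∑ l, (starRingEnd ℂ) (x l) * (r l n : ℂ))
      = ∑ m, ∑ l, x m * (starRingEnd ℂ) (x l) * ((∑ n, r m n * r l n : ℝ) : ℂ) := by
    simp only [sum_mul_sum]
    simp only [Complex.ofReal_sum, mul_sum, Complex.ofReal_mul]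
    rw [sum_comm]
    refine sum_congr rfl fun m _ => ?_
    rw [sum_comm]
    refine sum_congr rfl fun l _ => sum_congr rfl fun n _ => by ring
  have hleft : ∑ n, (∑ m, x m * (r m n : ℂ)) * (∑ l, (starRingEnd ℂ) (x l) * (r l n : ℂ))
      = ((μ ^ 2 * ∑ n, ‖x n‖ ^ 2 : ℝ) : ℂ) := by
    push_cast
    rw [mul_sum]
    refine sum_congr rfl fun n _ => ?_
    rw [hx', hconj, ← Complex.mul_conj']
    linear_combination -(μ : ℂ) ^ 2 * (x n * (starRingEnd ℂ) (x n)) * Complex.I_sq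
  have hcross : ∑ m, ∑ l, x m * (starRingEnd ℂ) (x l) * ((r l m * (s m - s l) : ℝ) : ℂ) = 0 := by
    have h1 : ∑ m, ∑ l, x m * (starRingEnd ℂ) (x l) * ((r l m * s m : ℝ) : ℂ)
        = ∑ m, Complex.I * μ * s m * (x m * (starRingEnd ℂ) (x m)) := by
      refine sum_congr rfl fun m _ => ?_
      calc _ = x m * s m * ∑ l, (starRingEnd ℂ) (x l) * (r l m : ℂ) := by
            rw [mul_sum]
            refine sum_congr rfl fun l _ => by push_cast; ring
        _ = _ := by rw [hconj]; ring
    have h2 : ∑ m, ∑ l, x m * (starRingEnd ℂ) (x l) * ((r l m * s l : ℝ) : ℂ)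
        = ∑ m, Complex.I * μ * s m * (x m * (starRingEnd ℂ) (x m)) := by
      rw [sum_comm]
      refine sum_congr rfl fun l _ => ?_
      calc _ = -((starRingEnd ℂ) (x l) * s l * ∑ m, x m * (r m l : ℂ)) := by
            rw [mul_sum, ← sum_neg_distrib]
            refine sum_congr rfl fun m _ => by rw [hanti l m]; push_cast; ring
        _ = _ := by rw [hx']; ring
    calc _ = ∑ m, ∑ l, x m * (starRingEnd ℂ) (x l) * ((r l m * s m : ℝ) : ℂ)
          - ∑ m, ∑ l, x m * (starRingEnd ℂ) (x l) * ((r l m * s l : ℝ) : ℂ) := by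
          simp only [← sum_sub_distrib]
          refine sum_congr rfl fun m _ => sum_congr rfl fun l _ => by push_cast; ring
      _ = 0 := by rw [h1, h2, sub_self]
  have hident : ((μ ^ 2 * ∑ n, ‖x n‖ ^ 2 : ℝ) : ℂ)
      = 2 * ∑ m, ∑ l, x m * (starRingEnd ℂ) (x l) * ((r l m ^ 2 : ℝ) : ℂ)
        + ((∑ m, ‖x m‖ ^ 2 * ∑ n, r m n ^ 2 : ℝ) : ℂ) := by
    rw [← hleft, hmain]
    have h3 : ((∑ m, ‖x m‖ ^ 2 * ∑ n, r m n ^ 2 : ℝ) : ℂ)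
        = ∑ m, ∑ l, x m * (starRingEnd ℂ) (x l)
          * ((if m = l then ∑ n, r m n ^ 2 else 0 : ℝ) : ℂ) := by
      rw [Complex.ofReal_sum]
      refine sum_congr rfl fun m _ => ?_
      symm
      rw [sum_eq_single m (fun l _ hl => by simp [hl.symm]) (by simp), if_pos rfl,
        Complex.mul_conj']
      push_cast
      ring
    rw [h3, ← add_zero (2 * _ + _), ← hcross, mul_sum]
    simp only [mul_sum, ← sum_add_distrib]
    refine sum_congr rfl fun m _ => sum_congr rfl fun l _ => ?_
    have hid : ∑ n, r m n * r l n = r l m * (s m - s l) + 2 * r l m ^ 2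
        + if m = l then ∑ n, r m n ^ 2 else 0 := sum_inv_sub_mul_inv_sub ht m l
    rw [hid, Complex.ofReal_add, Complex.ofReal_add]
    push_cast
    ring
  have hoff : ‖∑ m, ∑ l, x m * (starRingEnd ℂ) (x l) * ((r l m ^ 2 : ℝ) : ℂ)‖
      ≤ D * ∑ n, ‖x n‖ ^ 2 := by
    calc _ ≤ ∑ m, ∑ l, (‖x m‖ ^ 2 * r m l ^ 2 / 2 + ‖x l‖ ^ 2 * r l m ^ 2 / 2) := by
          refine (norm_sum_le _ _).trans (sum_le_sum fun m _ =>
            (norm_sum_le _ _).trans (sum_le_sum fun l _ => ?_))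
          rw [norm_mul, norm_mul, RCLike.norm_conj, Complex.norm_real, Real.norm_eq_abs,
            abs_of_nonneg (sq_nonneg _), hanti m l, neg_sq]
          nlinarith [mul_nonneg (sq_nonneg (‖x m‖ - ‖x l‖)) (sq_nonneg (r l m))]
      _ = ∑ m, ‖x m‖ ^ 2 * ∑ n, r m n ^ 2 := by
          simp only [sum_add_distrib]
          rw [sum_comm (f := fun m l => ‖x l‖ ^ 2 * r l m ^ 2 / 2), ← sum_add_distrib]
          refine sum_congr rfl fun m _ => ?_
          rw [← sum_add_distrib, mul_sum]
          refine sum_congr rfl fun l _ => by ring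
      _ ≤ _ := by
          rw [mul_sum]
          refine sum_le_sum fun m _ => ?_
          rw [mul_comm]
          exact mul_le_mul_of_nonneg_right (hD m) (by positivity)
  have hdiag : ∑ m, ‖x m‖ ^ 2 * ∑ n, r m n ^ 2 ≤ D * ∑ n, ‖x n‖ ^ 2 := by
    rw [mul_sum]
    refine sum_le_sum fun m _ => ?_
    rw [mul_comm]
    exact mul_le_mul_of_nonneg_right (hD m) (by positivity)
  have hre := congrArg Complex.re hident
  rw [Complex.add_re, Complex.ofReal_re, Complex.ofReal_re, ← Complex.ofReal_ofNat,
    Complex.re_ofReal_mul] at hre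
  have := (Complex.re_le_norm _).trans hoff
  rw [hre]
  linarith

/-- Hilbert's inequality for well-spaced points, with the spacing measured by
`D ≥ ∑ n, 1 / (t m - t n) ^ 2`. -/
theorem hilbert_inequality {ι : Type*} [Fintype ι] {t : ι → ℝ}
    (ht : Function.Injective t) {D : ℝ} (hD : ∀ m, ∑ n, ((t m - t n)⁻¹) ^ 2 ≤ D)
    (x : ι → ℂ) :
    ∑ n, ‖∑ m, x m * (((t m - t n)⁻¹ : ℝ) : ℂ)‖ ^ 2 ≤ 3 * D * ∑ n, ‖x n‖ ^ 2 := by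
  classical
  let A : Matrix ι ι ℂ := Matrix.of fun n m => Complex.I * (((t m - t n)⁻¹ : ℝ) : ℂ)
  have hA : A.IsHermitian := by
    ext n m
    simp only [A, Matrix.conjTranspose_apply, Matrix.of_apply, star_mul', RCLike.star_def,
      Complex.conj_I, Complex.conj_ofReal]
    rw [← neg_sub (t m) (t n), inv_neg]
    push_cast
    ring
  let u := hA.eigenvectorBasis
  let v : EuclideanSpace ℂ ι := WithLp.toLp 2 x
  let w : EuclideanSpace ℂ ι := WithLp.toLp 2 (A.mulVec x)
  have heig : ∀ i, (hA.eigenvalues i) ^ 2 ≤ 3 * D := by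
    intro i
    have h1 : ∑ n, ‖u i n‖ ^ 2 = 1 := by
      rw [← EuclideanSpace.norm_sq_eq, u.norm_eq_one, one_pow]
    have := hilbert_eigenvector_bound ht hD (x := fun n => u i n) (μ := hA.eigenvalues i) (by
      intro n
      have := congrFun (hA.mulVec_eigenvectorBasis i) n
      simp only [Matrix.mulVec, dotProduct, A, Matrix.of_apply, Pi.smul_apply,
        Complex.real_smul] at this
      change _ = -(Complex.I * _ * hA.eigenvectorBasis i n)
      rw [mul_assoc, ← this, mul_sum, ← sum_neg_distrib]
      refine sum_congr rfl fun m _ => ?_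
      linear_combination (((t m - t n)⁻¹ : ℝ) : ℂ) * (hA.eigenvectorBasis i m) * Complex.I_sq)
    simpa [h1] using this
  have hinner : ∀ i, inner ℂ (u i) w = hA.eigenvalues i * inner ℂ (u i) v := by
    intro i
    have hsymm := Matrix.isSymmetric_toEuclideanLin_iff.2 hA (u i) v
    have e1 : Matrix.toEuclideanLin A v = w := rfl
    have e2 : Matrix.toEuclideanLin A (u i) = (hA.eigenvalues i : ℂ) • u i := by
      ext n
      exact congrFun (hA.mulVec_eigenvectorBasis i) n
    rw [e1, e2, inner_smul_left, Complex.conj_ofReal] at hsymm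
    exact hsymm.symm
  have hw : ‖w‖ ^ 2 ≤ 3 * D * ‖v‖ ^ 2 := by
    rw [← u.sum_sq_norm_inner_right w, ← u.sum_sq_norm_inner_right v, mul_sum]
    refine sum_le_sum fun i _ => ?_
    rw [hinner, norm_mul, mul_pow, Complex.norm_real, Real.norm_eq_abs, sq_abs]
    exact mul_le_mul_of_nonneg_right (heig i) (by positivity)
  rw [EuclideanSpace.norm_sq_eq, EuclideanSpace.norm_sq_eq] at hw
  refine le_trans (le_of_eq (sum_congr rfl fun n _ => ?_)) hw
  have : w n = Complex.I * ∑ m, x m * (((t m - t n)⁻¹ : ℝ) : ℂ) := by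
    change ∑ m, A n m * x m = _
    rw [mul_sum]
    refine sum_congr rfl fun m _ => ?_
    simp only [A, Matrix.of_apply]
    ring
  rw [this, norm_mul, Complex.norm_I, one_mul]

/-- Hilbert's inequality for a real sequence that is `d`-separated along a finite index set. -/
theorem hilbert_inequality_of_separated (U : Finset ℕ) {t : ℕ → ℝ} {d : ℝ} (hd : 0 < d)
    (ht : ∀ m ∈ U, ∀ n ∈ U, d * |(m : ℝ) - n| ≤ |t m - t n|) (x : ℕ → ℂ) :
    ∑ n ∈ U, ‖∑ m ∈ U, x m * (((t m - t n)⁻¹ : ℝ) : ℂ)‖ ^ 2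
      ≤ 3 * ((d⁻¹) ^ 2 * ∑' k : ℤ, 1 / (k : ℝ) ^ 2) * ∑ n ∈ U, ‖x n‖ ^ 2 := by
  have hinj : Function.Injective fun m : U => t m := by
    intro m n h
    have h1 := ht m m.2 n n.2
    simp only at h
    rw [h, sub_self, abs_zero] at h1
    have h2 : |((m : ℕ) : ℝ) - (n : ℕ)| ≤ 0 := nonpos_of_mul_nonpos_right h1 hd
    have h3 := sub_eq_zero.1 (abs_nonpos_iff.1 h2)
    exact Subtype.ext (by exact_mod_cast h3)
  have hD : ∀ m : U, ∑ n : U, ((t m - t n)⁻¹) ^ 2 ≤ (d⁻¹) ^ 2 * ∑' k : ℤ, 1 / (k : ℝ) ^ 2 := by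
    intro m
    rw [Finset.sum_coe_sort U fun n => ((t m - t n)⁻¹) ^ 2]
    calc _ ≤ ∑ n ∈ U, (d⁻¹) ^ 2 * (1 / ((((m : ℕ) : ℤ) - (n : ℤ) : ℤ) : ℝ) ^ 2) := by
          refine sum_le_sum fun n hn => ?_
          by_cases hmn : (m : ℕ) = n
          · simp [hmn]
          have h0 : 0 < |((m : ℕ) : ℝ) - n| :=
            abs_pos.2 (sub_ne_zero.2 (by exact_mod_cast hmn))
          have h1 := ht m m.2 n hn
          rw [← sq_abs, abs_inv]
          push_cast
          rw [← sq_abs (((m : ℕ) : ℝ) - n), one_div, ← inv_pow, ← mul_pow, ← mul_inv]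
          have := mul_pos hd h0
          gcongr
      _ = (d⁻¹) ^ 2 * ∑ k ∈ U.image fun n : ℕ => ((m : ℕ) : ℤ) - (n : ℤ), 1 / (k : ℝ) ^ 2 := by
          rw [← mul_sum, sum_image]
          intro a _ b _ hab
          simpa using hab
      _ ≤ _ := by
          refine mul_le_mul_of_nonneg_left ?_ (by positivity)
          exact (Real.summable_one_div_int_pow.2 one_lt_two).sum_le_tsum _
            fun k _ => by positivity
  have := hilbert_inequality hinj hD fun n => x n
  rw [Finset.sum_coe_sort U fun n => ‖x n‖ ^ 2] at this
  rw [← Finset.sum_coe_sort U]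
  refine le_trans (le_of_eq (sum_congr rfl fun n _ => ?_)) this
  rw [← Finset.sum_coe_sort U]

theorem sum_range_rpow_le {r : ℝ} (hr : 0 < r) (hr1 : r ≤ 1) (n : ℕ) :
    ∑ m ∈ range n, ((m : ℝ) + 1) ^ (r - 1) ≤ (n : ℝ) ^ r / r := by
  induction n with
  | zero => simp [Real.zero_rpow hr.ne']
  | succ n ih =>
    rw [sum_range_succ]
    have hp : (0 : ℝ) < (n : ℝ) + 1 := by positivity
    have hb := rpow_one_add_le_one_add_mul_self (s := -(1 / ((n : ℝ) + 1)))
      (by rw [neg_le_neg_iff, div_le_one hp]; linarith [n.cast_nonneg (α := ℝ)]) hr.le hr1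
    have he : (1 : ℝ) + -(1 / ((n : ℝ) + 1)) = n / (n + 1) := by field_simp; ring
    rw [he, Real.div_rpow n.cast_nonneg hp.le, div_le_iff₀ (by positivity)] at hb
    rw [le_div_iff₀ hr] at ih ⊢
    rw [Real.rpow_sub_one hp.ne']
    push_cast
    have : (1 + r * -(1 / ((n : ℝ) + 1))) * ((n : ℝ) + 1) ^ r
        = ((n : ℝ) + 1) ^ r - ((n : ℝ) + 1) ^ r / (n + 1) * r := by ring
    linarith

theorem sum_Ico_rpow_le {s : ℝ} (hs : 0 < s) (n K : ℕ) :
    ∑ m ∈ Ico (n + 1) K, ((m : ℝ) + 1) ^ (-s - 1) ≤ ((n : ℝ) + 1) ^ (-s) / s := by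
  rcases le_total K (n + 1) with hK | hK
  · rw [Ico_eq_empty_of_le hK, sum_empty]
    positivity
  suffices h : ∑ m ∈ Ico (n + 1) K, ((m : ℝ) + 1) ^ (-s - 1)
      ≤ (((n : ℝ) + 1) ^ (-s) - (K : ℝ) ^ (-s)) / s by
    refine h.trans ?_
    gcongr
    have : 0 ≤ (K : ℝ) ^ (-s) := by positivity
    linarith
  induction K, hK using Nat.le_induction with
  | base => simp
  | succ K hK ih =>
    rw [sum_Ico_succ_top hK]
    have hK0 : (0 : ℝ) < K := by exact_mod_cast (by omega : 0 < K)
    have hp : (0 : ℝ) < (K : ℝ) + 1 := by positivity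
    have hlog : Real.log (K / (K + 1)) ≤ -(1 / ((K : ℝ) + 1)) := by
      refine (Real.log_le_sub_one_of_pos (by positivity)).trans (le_of_eq ?_)
      field_simp
      ring
    have hb : 1 + s / (K + 1) ≤ ((K : ℝ) / (K + 1)) ^ (-s) := by
      rw [Real.rpow_def_of_pos (by positivity)]
      refine le_trans ?_ (Real.add_one_le_exp _)
      have := mul_le_mul_of_nonneg_left hlog hs.le
      have e : s * -(1 / ((K : ℝ) + 1)) = -(s / (K + 1)) := by ring
      linarith
    rw [Real.div_rpow hK0.le hp.le, le_div_iff₀ (by positivity)] at hb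
    rw [le_div_iff₀ hs] at ih ⊢
    rw [Real.rpow_sub_one hp.ne']
    push_cast
    have : (1 + s / ((K : ℝ) + 1)) * ((K : ℝ) + 1) ^ (-s)
        = ((K : ℝ) + 1) ^ (-s) + ((K : ℝ) + 1) ^ (-s) / (K + 1) * s := by ring
    linarith

theorem sum_range_le_of_rpow_bounds {f : ℕ → ℝ} {A B r s : ℝ} (hr : 0 < r) (hr1 : r ≤ 1)
    (hs : 0 < s) (hA : 0 ≤ A) (hB : 0 ≤ B) (hf : ∀ m, 0 ≤ f m) (n : ℕ)
    (hsmall : ∀ m ≤ n, f m ≤ A * ((m : ℝ) + 1) ^ (r - 1))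
    (hlarge : ∀ m, n < m → f m ≤ B * ((m : ℝ) + 1) ^ (-s - 1)) (K : ℕ) :
    ∑ m ∈ range K, f m ≤ A * (((n : ℝ) + 1) ^ r / r) + B * (((n : ℝ) + 1) ^ (-s) / s) := by
  calc ∑ m ∈ range K, f m ≤ ∑ m ∈ range (n + 1) ∪ Ico (n + 1) K, f m := by
        refine sum_le_sum_of_subset_of_nonneg ?_ fun m _ _ => hf m
        intro m hm
        simp only [mem_union, mem_range, mem_Ico] at hm ⊢
        omega
    _ = ∑ m ∈ range (n + 1), f m + ∑ m ∈ Ico (n + 1) K, f m := by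
        refine sum_union (disjoint_left.2 fun m h1 h2 => ?_)
        simp only [mem_range, mem_Ico] at h1 h2
        omega
    _ ≤ ∑ m ∈ range (n + 1), A * ((m : ℝ) + 1) ^ (r - 1)
        + ∑ m ∈ Ico (n + 1) K, B * ((m : ℝ) + 1) ^ (-s - 1) := by
        refine add_le_add (sum_le_sum fun m hm => hsmall m ?_)
          (sum_le_sum fun m hm => hlarge m ?_)
        · exact Nat.lt_succ_iff.1 (mem_range.1 hm)
        · exact (mem_Ico.1 hm).1
    _ ≤ _ := by
        rw [← mul_sum, ← mul_sum]
        have h := sum_range_rpow_le hr hr1 (n + 1)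
        push_cast at h
        exact add_le_add (mul_le_mul_of_nonneg_left h hA)
          (mul_le_mul_of_nonneg_left (sum_Ico_rpow_le hs n K) hB)

/-- Schur's test for nonnegative kernels on a finite index set. -/
theorem schur_test {ι : Type*} (S : Finset ι) {k : ι → ι → ℝ} {w f : ι → ℝ} {A : ℝ} (hA : 0 ≤ A)
    (hk : ∀ n m, 0 ≤ k n m) (hw : ∀ m, 0 < w m)
    (hrow : ∀ n, ∑ m ∈ S, k n m * w m ≤ A * w n) (hcol : ∀ m, ∑ n ∈ S, k n m * w n ≤ A * w m) :
    ∑ n ∈ S, (∑ m ∈ S, k n m * f m) ^ 2 ≤ A ^ 2 * ∑ m ∈ S, f m ^ 2 := by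
  have hcs : ∀ n ∈ S, (∑ m ∈ S, k n m * f m) ^ 2
      ≤ ∑ m ∈ S, A * (f m ^ 2 / w m) * (k n m * w n) := by
    intro n _
    calc _ ≤ (∑ m ∈ S, k n m * w m) * ∑ m ∈ S, k n m * (f m ^ 2 / w m) := by
          refine sum_sq_le_sum_mul_sum_of_sq_le_mul S
            (fun m _ => mul_nonneg (hk n m) (hw m).le)
            (fun m _ => mul_nonneg (hk n m) (div_nonneg (sq_nonneg _) (hw m).le))
            fun m _ => le_of_eq ?_
          have := (hw m).ne'
          field_simp
      _ ≤ (A * w n) * ∑ m ∈ S, k n m * (f m ^ 2 / w m) :=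
          mul_le_mul_of_nonneg_right (hrow n) (sum_nonneg fun m _ =>
            mul_nonneg (hk n m) (div_nonneg (sq_nonneg _) (hw m).le))
      _ = _ := by
          rw [mul_sum]
          exact sum_congr rfl fun m _ => by ring
  refine (sum_le_sum hcs).trans ?_
  rw [sum_comm, mul_sum]
  refine sum_le_sum fun m _ => ?_
  rw [← mul_sum]
  refine (mul_le_mul_of_nonneg_left (hcol m)
    (mul_nonneg hA (div_nonneg (sq_nonneg _) (hw m).le))).trans (le_of_eq ?_)
  have := (hw m).ne'
  field_simp

/-- The kernel `(m + 1) ^ (α - 1) * max (m + 1) (n + 1) ^ (-α)` is bounded on `ℓ²`. -/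
theorem hardy_kernel_bound {α : ℝ} (hα : 1 / 2 < α) (hα1 : α < 1) (K : ℕ) (f : ℕ → ℝ) :
    ∑ n ∈ range K, (∑ m ∈ range K,
        ((m : ℝ) + 1) ^ (α - 1) * (max ((m : ℝ) + 1) (n + 1)) ^ (-α) * f m) ^ 2
      ≤ (1 / (α - 1 / 2) + 2) ^ 2 * ∑ m ∈ range K, f m ^ 2 := by
  have hr : 0 < α - 1 / 2 := by linarith
  refine schur_test (range K)
    (k := fun n m : ℕ => ((m : ℝ) + 1) ^ (α - 1) * (max ((m : ℝ) + 1) (n + 1)) ^ (-α))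
    (w := fun m : ℕ => ((m : ℝ) + 1) ^ (-(1 / 2) : ℝ)) (by positivity)
    (fun n m => by positivity) (fun m => by positivity) (fun n => ?_) (fun m => ?_)
  · have hq : (0 : ℝ) < n + 1 := by positivity
    refine (sum_range_le_of_rpow_bounds (A := ((n : ℝ) + 1) ^ (-α)) (B := 1)
      (r := α - 1 / 2) (s := 1 / 2) hr (by linarith) (by norm_num) (by positivity) (by norm_num)
      (fun m => by positivity) n (fun m hm => ?_) (fun m hm => ?_) K).trans (le_of_eq ?_)
    · have hp : (0 : ℝ) < m + 1 := by positivity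
      have hmn : (m : ℝ) ≤ n := by exact_mod_cast hm
      rw [max_eq_right (by linarith), mul_right_comm, ← Real.rpow_add hp, mul_comm]
      refine le_of_eq ?_
      ring_nf
    · have hp : (0 : ℝ) < m + 1 := by positivity
      have hmn : (n : ℝ) ≤ m := by exact_mod_cast hm.le
      rw [max_eq_left (by linarith), ← Real.rpow_add hp, ← Real.rpow_add hp, one_mul]
      refine le_of_eq ?_
      ring_nf
    · rw [← mul_div_assoc, ← Real.rpow_add hq]
      ring_nf
  · have hp : (0 : ℝ) < m + 1 := by positivity
    refine (sum_range_le_of_rpow_bounds (A := ((m : ℝ) + 1) ^ (-1 : ℝ))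
      (B := ((m : ℝ) + 1) ^ (α - 1))
      (r := 1 / 2) (s := α - 1 / 2) (by norm_num) (by norm_num) hr (by positivity) (by positivity)
      (fun n => by positivity) m (fun n hn => ?_) (fun n hn => ?_) K).trans (le_of_eq ?_)
    · have hmn : (n : ℝ) ≤ m := by exact_mod_cast hn
      rw [max_eq_left (by linarith), ← Real.rpow_add hp]
      refine le_of_eq ?_
      ring_nf
    · have hq : (0 : ℝ) < n + 1 := by positivity
      have hmn : (m : ℝ) ≤ n := by exact_mod_cast hn.le
      rw [max_eq_right (by linarith), mul_assoc, ← Real.rpow_add hq]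
      refine le_of_eq ?_
      ring_nf
    · rw [← mul_div_assoc, ← mul_div_assoc, ← Real.rpow_add hp, ← Real.rpow_add hp]
      ring_nf

theorem le_sub_of_gap {α c : ℝ} (hα1 : α < 1) (hc : 0 < c) {T : ℕ → ℝ}
    (hT : ∀ k : ℕ, c * ((k : ℝ) + 1) ^ (α - 1) ≤ T (k + 1) - T k) {m n : ℕ} (hmn : m ≤ n) :
    c * ((n : ℝ) - m) * ((n : ℝ) + 1) ^ (α - 1) ≤ T n - T m := by
  induction n, hmn using Nat.le_induction with
  | base => simp
  | succ n hmn ih =>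
    have hmn' : (m : ℝ) ≤ n := by exact_mod_cast hmn
    have h1 : ((n : ℝ) + 1 + 1) ^ (α - 1) ≤ ((n : ℝ) + 1) ^ (α - 1) :=
      Real.rpow_le_rpow_of_nonpos (by positivity) (by linarith) (by linarith)
    have h2 := mul_le_mul_of_nonneg_left h1
      (mul_nonneg hc.le (by linarith : 0 ≤ (n : ℝ) + 1 - m))
    have h3 := hT n
    push_cast
    nlinarith

theorem le_abs_sub_of_gap {α c : ℝ} (hα1 : α < 1) (hc : 0 < c) {T : ℕ → ℝ}
    (hT : ∀ k : ℕ, c * ((k : ℝ) + 1) ^ (α - 1) ≤ T (k + 1) - T k) (m n : ℕ) :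
    c * |(m : ℝ) - n| * (max ((m : ℝ) + 1) (n + 1)) ^ (α - 1) ≤ |T m - T n| := by
  rcases le_total m n with h | h
  · have h' : (m : ℝ) ≤ n := by exact_mod_cast h
    rw [max_eq_right (by linarith), abs_sub_comm, abs_of_nonneg (by linarith), abs_sub_comm]
    exact (le_sub_of_gap hα1 hc hT h).trans (le_abs_self _)
  · have h' : (n : ℝ) ≤ m := by exact_mod_cast h
    rw [max_eq_left (by linarith), abs_of_nonneg (by linarith)]
    exact (le_sub_of_gap hα1 hc hT h).trans (le_abs_self _)

/-- `m + 1` and `n + 1` lie in the same or in adjacent dyadic blocks. -/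
def DyadicNear (m n : ℕ) : Prop :=
  Nat.log 2 (m + 1) ≤ Nat.log 2 (n + 1) + 1 ∧ Nat.log 2 (n + 1) ≤ Nat.log 2 (m + 1) + 1

instance (m n : ℕ) : Decidable (DyadicNear m n) :=
  inferInstanceAs (Decidable (_ ∧ _))

theorem two_mul_le_of_log_add_two_le {p q : ℕ} (hp : p ≠ 0)
    (h : Nat.log 2 q + 2 ≤ Nat.log 2 p) : 2 * q ≤ p := by
  have h1 := Nat.pow_log_le_self 2 hp
  have h2 := Nat.lt_pow_succ_log_self one_lt_two q
  have h3 : 2 ^ (Nat.log 2 q + 2) ≤ 2 ^ Nat.log 2 p := Nat.pow_le_pow_right (by norm_num) h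
  rw [Nat.succ_eq_add_one] at h2
  rw [show Nat.log 2 q + 2 = (Nat.log 2 q + 1) + 1 from rfl, pow_succ] at h3
  omega

theorem max_le_two_mul_abs_sub_of_not_dyadicNear {m n : ℕ} (h : ¬ DyadicNear m n) :
    max ((m : ℝ) + 1) (n + 1) ≤ 2 * |(m : ℝ) - n| := by
  have h' : 2 * (m + 1) ≤ n + 1 ∨ 2 * (n + 1) ≤ m + 1 := by
    rw [DyadicNear, not_and_or, not_le, not_le] at h
    rcases h with h | h
    · exact Or.inr (two_mul_le_of_log_add_two_le (by omega) h)
    · exact Or.inl (two_mul_le_of_log_add_two_le (by omega) h)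
  rcases h' with h' | h'
  · have h2 : 2 * ((m : ℝ) + 1) ≤ n + 1 := by exact_mod_cast h'
    have hm : (0 : ℝ) ≤ m := m.cast_nonneg
    rw [max_eq_right (by linarith), abs_sub_comm, abs_of_nonneg (by linarith)]
    linarith
  · have h2 : 2 * ((n : ℝ) + 1) ≤ m + 1 := by exact_mod_cast h'
    have hn : (0 : ℝ) ≤ n := n.cast_nonneg
    rw [max_eq_left (by linarith), abs_of_nonneg (by linarith)]
    linarith

/-- The part of the weighted Hilbert transform away from the diagonal. -/
theorem far_part_bound {α c : ℝ} (hα : 1 / 2 < α) (hα1 : α < 1) (hc : 0 < c) {T : ℕ → ℝ}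
    (hT : ∀ k : ℕ, c * ((k : ℝ) + 1) ^ (α - 1) ≤ T (k + 1) - T k) (K : ℕ) (b : ℕ → ℂ) :
    ∑ n ∈ range K, ‖∑ m ∈ range K with ¬ DyadicNear m n,
        ((((m : ℝ) + 1) ^ (α - 1) : ℝ) : ℂ) * b m * (((T m - T n)⁻¹ : ℝ) : ℂ)‖ ^ 2
      ≤ (2 / c) ^ 2 * (1 / (α - 1 / 2) + 2) ^ 2 * ∑ m ∈ range K, ‖b m‖ ^ 2 := by
  rw [mul_assoc]
  refine le_trans ?_ (mul_le_mul_of_nonneg_left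
    (hardy_kernel_bound hα hα1 K fun m => ‖b m‖) (by positivity))
  rw [mul_sum]
  refine sum_le_sum fun n _ => ?_
  rw [← mul_pow]
  refine pow_le_pow_left₀ (norm_nonneg _) ?_ 2
  rw [mul_sum]
  calc _ ≤ ∑ m ∈ range K with ¬ DyadicNear m n,
        2 / c * (((m : ℝ) + 1) ^ (α - 1) * (max ((m : ℝ) + 1) (n + 1)) ^ (-α) * ‖b m‖) := by
        refine (norm_sum_le _ _).trans (sum_le_sum fun m hm => ?_)
        have hfar := max_le_two_mul_abs_sub_of_not_dyadicNear (mem_filter.1 hm).2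
        have hgap := le_abs_sub_of_gap hα1 hc hT m n
        set M := max ((m : ℝ) + 1) (n + 1)
        have hM : 0 < M := lt_of_lt_of_le (by positivity) (le_max_left _ _)
        have hinv : |T m - T n|⁻¹ ≤ 2 / c * M ^ (-α) := by
          have h1 : c / 2 * M ^ α ≤ |T m - T n| := by
            refine le_trans ?_ hgap
            have : M ^ α = M * M ^ (α - 1) := by
              rw [Real.rpow_sub_one hM.ne']
              field_simp
            rw [this]
            have h0 : 0 ≤ M ^ (α - 1) := by positivity
            nlinarith [mul_le_mul_of_nonneg_left hfar (mul_nonneg hc.le h0)]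
          have h2 : 2 / c * M ^ (-α) = (c / 2 * M ^ α)⁻¹ := by
            rw [Real.rpow_neg hM.le, mul_inv, inv_div]
          rw [h2]
          exact inv_anti₀ (by positivity) h1
        rw [norm_mul, norm_mul, Complex.norm_real, Complex.norm_real, Real.norm_eq_abs,
          Real.norm_eq_abs, abs_inv, abs_of_nonneg (by positivity)]
        calc _ ≤ ((m : ℝ) + 1) ^ (α - 1) * ‖b m‖ * (2 / c * M ^ (-α)) := by gcongr
          _ = _ := by ring
    _ ≤ _ := by
        refine sum_le_sum_of_subset_of_nonneg (filter_subset _ _) fun m _ _ => ?_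
        positivity

/-- The part of the weighted Hilbert transform near the diagonal. -/
theorem near_part_bound {α c : ℝ} (hα : 1 / 2 < α) (hα1 : α < 1) (hc : 0 < c) {T : ℕ → ℝ}
    (hT : ∀ k : ℕ, c * ((k : ℝ) + 1) ^ (α - 1) ≤ T (k + 1) - T k) (K : ℕ) (b : ℕ → ℂ) :
    ∑ n ∈ range K, ‖∑ m ∈ range K with DyadicNear m n,
        ((((m : ℝ) + 1) ^ (α - 1) : ℝ) : ℂ) * b m * (((T m - T n)⁻¹ : ℝ) : ℂ)‖ ^ 2
      ≤ 9 * (8 / c) ^ 2 * (∑' k : ℤ, 1 / (k : ℝ) ^ 2) * ∑ m ∈ range K, ‖b m‖ ^ 2 := by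
  set Z : ℝ := ∑' k : ℤ, 1 / (k : ℝ) ^ 2
  have hZ : 0 ≤ Z := tsum_nonneg fun k => by positivity
  let U : ℕ → Finset ℕ := fun j =>
    {m ∈ range K | Nat.log 2 (m + 1) ≤ j + 1 ∧ j ≤ Nat.log 2 (m + 1) + 1}
  have hlt : ∀ {j m : ℕ}, m ∈ U j → (m : ℝ) + 1 ≤ 2 ^ (j + 2) := by
    intro j m hm
    have h1 := Nat.lt_pow_succ_log_self one_lt_two (m + 1)
    have h2 : 2 ^ (Nat.log 2 (m + 1)).succ ≤ 2 ^ (j + 2) :=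
      Nat.pow_le_pow_right (by norm_num) (Nat.succ_le_succ (mem_filter.1 hm).2.1)
    exact_mod_cast h1.le.trans h2
  have hgt : ∀ {j m : ℕ}, m ∈ U j → (2 : ℝ) ^ (j + 2) ≤ 8 * ((m : ℝ) + 1) := by
    intro j m hm
    have h1 := Nat.pow_log_le_self 2 (Nat.succ_ne_zero m)
    have h2 : 2 ^ (j + 2) ≤ 2 ^ (Nat.log 2 (m + 1) + 3) :=
      Nat.pow_le_pow_right (by norm_num) (by have := (mem_filter.1 hm).2.2; omega)
    rw [pow_add 2 _ 3] at h2
    rw [Nat.succ_eq_add_one] at h1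
    have : 2 ^ (j + 2) ≤ 8 * (m + 1) := by omega
    exact_mod_cast this
  have hblock : ∀ j, ∑ n ∈ U j, ‖∑ m ∈ U j,
        ((((m : ℝ) + 1) ^ (α - 1) : ℝ) : ℂ) * b m * (((T m - T n)⁻¹ : ℝ) : ℂ)‖ ^ 2
      ≤ 3 * (8 / c) ^ 2 * Z * ∑ m ∈ U j, ‖b m‖ ^ 2 := by
    intro j
    set P : ℝ := (2 : ℝ) ^ (j + 2)
    have hP : 0 < P := by positivity
    have hPα : 0 < P ^ (α - 1) := by positivity
    refine (hilbert_inequality_of_separated (U j) (d := c * P ^ (α - 1)) (by positivity)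
      (fun m hm n hn => ?_) fun m => ((((m : ℝ) + 1) ^ (α - 1) : ℝ) : ℂ) * b m).trans ?_
    · refine le_trans ?_ (le_abs_sub_of_gap hα1 hc hT m n)
      rw [mul_right_comm]
      refine mul_le_mul_of_nonneg_left (Real.rpow_le_rpow_of_nonpos
        (lt_of_lt_of_le (by positivity) (le_max_left _ _)) (max_le (hlt hm) (hlt hn))
        (by linarith)) (by positivity)
    · have hx : ∀ m ∈ U j, ‖((((m : ℝ) + 1) ^ (α - 1) : ℝ) : ℂ) * b m‖ ^ 2
          ≤ (8 * P ^ (α - 1)) ^ 2 * ‖b m‖ ^ 2 := by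
        intro m hm
        have hw : ((m : ℝ) + 1) ^ (α - 1) ≤ 8 * P ^ (α - 1) := by
          have h1 : (8 * ((m : ℝ) + 1)) ^ (α - 1) ≤ P ^ (α - 1) :=
            Real.rpow_le_rpow_of_nonpos hP (hgt hm) (by linarith)
          have h2 : (8 : ℝ) ^ (-1 : ℝ) ≤ 8 ^ (α - 1) :=
            Real.rpow_le_rpow_of_exponent_le (by norm_num) (by linarith)
          rw [Real.rpow_neg_one] at h2
          rw [Real.mul_rpow (by norm_num) (by positivity)] at h1
          have h3 : 0 ≤ ((m : ℝ) + 1) ^ (α - 1) := by positivity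
          have := mul_le_mul_of_nonneg_right h2 h3
          linarith
        rw [norm_mul, Complex.norm_real, Real.norm_eq_abs, abs_of_nonneg (by positivity), mul_pow]
        gcongr
      calc _ ≤ 3 * (((c * P ^ (α - 1))⁻¹) ^ 2 * Z)
            * ∑ m ∈ U j, (8 * P ^ (α - 1)) ^ 2 * ‖b m‖ ^ 2 :=
            mul_le_mul_of_nonneg_left (sum_le_sum hx) (by positivity)
        _ = _ := by
            rw [← mul_sum]
            field_simp
  have hmaps : ∀ n ∈ range K, Nat.log 2 (n + 1) ∈ range (K + 1) := by
    intro n hn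
    have := Nat.log_le_self 2 (n + 1)
    have := mem_range.1 hn
    rw [mem_range]
    omega
  rw [← sum_fiberwise_of_maps_to hmaps]
  calc _ ≤ ∑ j ∈ range (K + 1), 3 * (8 / c) ^ 2 * Z * ∑ m ∈ U j, ‖b m‖ ^ 2 := by
        refine sum_le_sum fun j _ => le_trans ?_ (hblock j)
        refine le_trans (le_of_eq (sum_congr rfl fun n hn => ?_))
          (sum_le_sum_of_subset_of_nonneg (s := {n ∈ range K | Nat.log 2 (n + 1) = j}) ?_
            fun _ _ _ => by positivity)
        · rw [← (mem_filter.1 hn).2]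
          rfl
        · intro n hn
          rw [mem_filter] at hn
          exact mem_filter.2 ⟨hn.1, by omega, by omega⟩
    _ ≤ _ := by
        rw [← mul_sum]
        have hcount : ∑ j ∈ range (K + 1), ∑ m ∈ U j, ‖b m‖ ^ 2
            ≤ 3 * ∑ m ∈ range K, ‖b m‖ ^ 2 := by
          simp only [U, sum_filter]
          rw [sum_comm, mul_sum]
          refine sum_le_sum fun m _ => ?_
          rw [← sum_filter, sum_const, nsmul_eq_mul]
          refine mul_le_mul_of_nonneg_right ?_ (by positivity)
          have hsub : {j ∈ range (K + 1) | Nat.log 2 (m + 1) ≤ j + 1 ∧ j ≤ Nat.log 2 (m + 1) + 1}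
              ⊆ Icc (Nat.log 2 (m + 1) - 1) (Nat.log 2 (m + 1) + 1) := by
            intro j hj
            rw [mem_filter] at hj
            rw [mem_Icc]
            omega
          have := card_le_card hsub
          rw [Nat.card_Icc] at this
          exact_mod_cast (by omega : Finset.card {j ∈ range (K + 1) |
            Nat.log 2 (m + 1) ≤ j + 1 ∧ j ≤ Nat.log 2 (m + 1) + 1} ≤ 3)
        refine (mul_le_mul_of_nonneg_left hcount (by positivity)).trans (le_of_eq ?_)
        ring

theorem truncated_weighted_hilbert_bound {α c : ℝ} (hα : 1 / 2 < α) (hα1 : α < 1) (hc : 0 < c) :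
    ∃ C : ℝ, 0 < C ∧ ∀ T : ℕ → ℝ,
      (∀ k : ℕ, c * ((k : ℝ) + 1) ^ (α - 1) ≤ T (k + 1) - T k) → ∀ (K : ℕ) (b : ℕ → ℂ),
        ∑ n ∈ range K, ‖∑ m ∈ range K,
            ((((m : ℝ) + 1) ^ (α - 1) : ℝ) : ℂ) * b m * (((T m - T n)⁻¹ : ℝ) : ℂ)‖ ^ 2
          ≤ C * ∑ m ∈ range K, ‖b m‖ ^ 2 := by
  have hr : 0 < α - 1 / 2 := by linarith
  have hZ : 0 ≤ ∑' k : ℤ, 1 / (k : ℝ) ^ 2 := tsum_nonneg fun k => by positivity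
  refine ⟨2 * (9 * (8 / c) ^ 2 * (∑' k : ℤ, 1 / (k : ℝ) ^ 2))
    + 2 * ((2 / c) ^ 2 * (1 / (α - 1 / 2) + 2) ^ 2), by positivity, fun T hT K b => ?_⟩
  have hnear := near_part_bound hα hα1 hc hT K b
  have hfar := far_part_bound hα hα1 hc hT K b
  rw [add_mul, mul_assoc 2, mul_assoc 2]
  refine le_trans ?_ (add_le_add (mul_le_mul_of_nonneg_left hnear zero_le_two)
    (mul_le_mul_of_nonneg_left hfar zero_le_two))
  rw [mul_sum, mul_sum, ← sum_add_distrib]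
  refine sum_le_sum fun n _ => ?_
  rw [← sum_filter_add_sum_filter_not (range K) fun m => DyadicNear m n]
  generalize (∑ m ∈ range K with DyadicNear m n, _ : ℂ) = u
  generalize (∑ m ∈ range K with ¬ DyadicNear m n, _ : ℂ) = v
  nlinarith [norm_add_le u v, norm_nonneg (u + v), sq_nonneg (‖u‖ - ‖v‖)]

open Filter Topology in
/-- Bounds on all square truncations of an infinite matrix pass to the `ℓ²` limit. -/
theorem tsum_norm_tsum_sq_le_of_truncated {a : ℕ → ℕ → ℂ} {B : ℝ}
    (h : ∀ K : ℕ, ∑ n ∈ range K, ‖∑ m ∈ range K, a n m‖ ^ 2 ≤ B) :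
    ∑' n, ‖∑' m, a n m‖ ^ 2 ≤ B := by
  classical
  refine Real.tsum_le_of_sum_range_le (fun n => by positivity) fun N => ?_
  have hlim : Tendsto (fun K => ∑ n ∈ range N with Summable (a n), ‖∑ m ∈ range K, a n m‖ ^ 2)
      atTop (𝓝 (∑ n ∈ range N with Summable (a n), ‖∑' m, a n m‖ ^ 2)) :=
    tendsto_finsetSum _ fun n hn =>
      (((mem_filter.1 hn).2.hasSum.tendsto_sum_nat).norm).pow 2
  have heq : ∑ n ∈ range N, ‖∑' m, a n m‖ ^ 2
      = ∑ n ∈ range N with Summable (a n), ‖∑' m, a n m‖ ^ 2 := by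
    rw [sum_filter]
    refine sum_congr rfl fun n _ => ?_
    split_ifs with hs
    · rfl
    · simp [tsum_eq_zero_of_not_summable hs]
  rw [heq]
  refine le_of_tendsto hlim (eventually_atTop.2 ⟨N, fun K hK => le_trans ?_ (h K)⟩)
  refine sum_le_sum_of_subset_of_nonneg ?_ fun _ _ _ => by positivity
  exact (filter_subset _ _).trans (range_subset_range.2 hK)

end WeightedHilbert

/-- weighted discrete Hilbert transform bound, `α ∈ (1/2,1)`.
If `t` is strictly increasing with `t_{k+1} - t_k ≥ c k^{α-1}` for `k ≥ 1`, then there is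
`C̃ > 0` (depending only on α and c) with
`Σ_n |Σ_{m≠n} m^{α-1} b_m/(t_m - t_n)|² ≤ C̃ Σ_m |b_m|²` for every `b ∈ ℓ²`.
(Sequences are indexed by positive integers; here index `k : ℕ` stands for `k+1`.) -/
theorem stmt7 (α c : ℝ) (hα : 1 / 2 < α) (hα1 : α < 1) (hc : 0 < c) :
    ∃ C : ℝ, 0 < C ∧
      ∀ t : ℕ → ℝ, StrictMono t →
        (∀ k : ℕ, 1 ≤ k → t (k + 1) - t k ≥ c * (k : ℝ) ^ (α - 1)) →
        ∀ b : ℕ → ℂ, Summable (fun m => ‖b m‖ ^ 2) →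
          ∑' n : ℕ, ‖∑' m : {m : ℕ // m ≠ n},
              (((((m : ℕ) : ℝ) + 1) ^ (α - 1) : ℝ) : ℂ) * b m
                / ((t ((m : ℕ) + 1) : ℂ) - (t (n + 1) : ℂ))‖ ^ 2
            ≤ C * ∑' m : ℕ, ‖b m‖ ^ 2 := by
  obtain ⟨C, hC, hbound⟩ := truncated_weighted_hilbert_bound hα hα1 hc
  refine ⟨C, hC, fun t _ ht b hb => ?_⟩
  have hgap : ∀ k : ℕ, c * ((k : ℝ) + 1) ^ (α - 1) ≤ t (k + 1 + 1) - t (k + 1) := by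
    intro k
    have := ht (k + 1) (by omega)
    push_cast at this
    exact this
  have hinner : ∀ n : ℕ, ∑' m : {m : ℕ // m ≠ n},
      (((((m : ℕ) : ℝ) + 1) ^ (α - 1) : ℝ) : ℂ) * b m
        / ((t ((m : ℕ) + 1) : ℂ) - (t (n + 1) : ℂ))
      = ∑' m : ℕ, ((((m : ℝ) + 1) ^ (α - 1) : ℝ) : ℂ) * b m
        * (((t (m + 1) - t (n + 1))⁻¹ : ℝ) : ℂ) := by
    intro n
    refine (tsum_subtype {m : ℕ | m ≠ n} fun m => ((((m : ℝ) + 1) ^ (α - 1) : ℝ) : ℂ) * b m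
        / ((t (m + 1) : ℂ) - (t (n + 1) : ℂ))).trans (tsum_congr fun m => ?_)
    by_cases hmn : m = n
    · simp [hmn]
    · rw [Set.indicator_of_mem (by exact hmn), div_eq_mul_inv]
      push_cast
      rfl
  simp only [hinner]
  refine tsum_norm_tsum_sq_le_of_truncated fun K => ?_
  refine (hbound (fun k => t (k + 1)) hgap K b).trans (mul_le_mul_of_nonneg_left ?_ hC.le)
  exact hb.sum_le_tsum _ fun _ _ => by positivity
end

section
/- Let α > 1, c > 0, and let (t_k) be a strictly increasing real sequence with t_{k+1} - t_k ≥ c·k^{α-1} for all k ≥ 1. Then there is a constant C̃ > 0 depending only on α and c such that for every (b_m) ∈ ℓ²(ℕ), Σ_{n=1}^∞ |Σ_{m≠n} m^{α-1} b_m/(t_m - t_n)|² ≤ C̃ · Σ_m |b_m|². -/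
open Finset

theorem Matrix.IsHermitian.sum_norm_sq_mulVec_le {ι : Type*} [Fintype ι] [DecidableEq ι]
    {B : Matrix ι ι ℂ} (hB : B.IsHermitian) {Q : ℝ}
    (h : ∀ (μ : ℝ) (v : ι → ℂ), B.mulVec v = (μ : ℂ) • v →
      μ ^ 2 * ∑ i, ‖v i‖ ^ 2 ≤ Q * ∑ i, ‖v i‖ ^ 2) (x : ι → ℂ) :
    ∑ i, ‖B.mulVec x i‖ ^ 2 ≤ Q * ∑ i, ‖x i‖ ^ 2 := by
  set e := hB.eigenvectorBasis
  have hμ : ∀ j, hB.eigenvalues j ^ 2 ≤ Q := by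
    intro j
    have h1 := h (hB.eigenvalues j) (e j).ofLp (by
      have := hB.mulVec_eigenvectorBasis j
      ext i
      simpa using congrFun this i)
    have h2 : ∑ i, ‖(e j).ofLp i‖ ^ 2 = 1 := by
      rw [← EuclideanSpace.norm_sq_eq, e.orthonormal.1 j]; norm_num
    rw [h2] at h1
    linarith
  have hp : ∀ y : ι → ℂ, ∑ i, ‖y i‖ ^ 2 = ∑ j, ‖inner ℂ (e j) (WithLp.toLp 2 y)‖ ^ 2 := by
    intro y
    rw [e.sum_sq_norm_inner_right, EuclideanSpace.norm_sq_eq]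
  have hin : ∀ j, inner ℂ (e j) (WithLp.toLp 2 (B.mulVec x))
      = (hB.eigenvalues j : ℂ) * inner ℂ (e j) (WithLp.toLp 2 x) := by
    intro j
    have h3 := hB.mulVec_eigenvectorBasis j
    have hs := (Matrix.isSymmetric_toEuclideanLin_iff.2 hB) (e j) (WithLp.toLp 2 x)
    have h4 : Matrix.toEuclideanLin B (e j) = (hB.eigenvalues j : ℂ) • e j := by
      ext i
      simpa using congrFun h3 i
    rw [h4, inner_smul_left, Complex.conj_ofReal] at hs
    exact hs.symm
  rw [hp (B.mulVec x), hp x, Finset.mul_sum]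
  refine Finset.sum_le_sum fun j _ => ?_
  rw [hin, norm_mul, mul_pow, Complex.norm_real, Real.norm_eq_abs, sq_abs]
  exact mul_le_mul_of_nonneg_right (hμ j) (by positivity)

theorem sum_mul_norm_mul_norm_le {ι : Type*} [Fintype ι] {R : ι → ι → ℝ} {Q : ℝ}
    (h0 : ∀ m l, 0 ≤ R m l) (hs : ∀ m l, R m l = R l m) (hQ : ∀ m, ∑ l, R m l ≤ Q)
    (v : ι → ℂ) : ∑ m, ∑ l, R m l * (‖v m‖ * ‖v l‖) ≤ Q * ∑ m, ‖v m‖ ^ 2 := by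
  have h1 : ∑ m, ∑ l, R m l * (‖v m‖ * ‖v l‖) ≤
      ∑ m, ∑ l, (R m l * ‖v m‖ ^ 2 / 2 + R m l * ‖v l‖ ^ 2 / 2) :=
    sum_le_sum fun m _ => sum_le_sum fun l _ => by
      nlinarith [mul_nonneg (h0 m l) (sq_nonneg (‖v m‖ - ‖v l‖))]
  have h2 : ∑ m, ∑ l, R m l * ‖v l‖ ^ 2 / 2 = ∑ m, ∑ l, R m l * ‖v m‖ ^ 2 / 2 := by
    rw [sum_comm]
    exact sum_congr rfl fun m _ => sum_congr rfl fun l _ => by rw [hs]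
  simp only [sum_add_distrib, h2] at h1
  refine h1.trans ?_
  rw [← sum_add_distrib, mul_sum]
  refine sum_le_sum fun m _ => ?_
  rw [← sum_add_distrib]
  calc _ = (∑ l, R m l) * ‖v m‖ ^ 2 := by
        rw [sum_mul]; exact sum_congr rfl fun l _ => by ring
    _ ≤ _ := mul_le_mul_of_nonneg_right (hQ m) (by positivity)

/-- The Gram matrix of a weighted Hilbert matrix is a matrix with entries of second order plus a
commutator with a diagonal matrix. -/
theorem sum_weighted_hilbert_mul {ι : Type*} [Fintype ι] [DecidableEq ι] {t : ι → ℝ}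
    (ht : Function.Injective t) (s : ι → ℝ) {m l : ι} (hml : m ≠ l) :
    ∑ n, s n * s m / (t n - t m) * (s n * s l / (t n - t l)) =
      s m * s l * (s m ^ 2 + s l ^ 2) / (t m - t l) ^ 2
      - s m * s l / (t m - t l) *
        (∑ n, s n ^ 2 / (t m - t n) - ∑ n, s n ^ 2 / (t l - t n)) := by
  have hne : t m - t l ≠ 0 := sub_ne_zero.2 (ht.ne hml)
  have key : ∀ n, s n * s m / (t n - t m) * (s n * s l / (t n - t l)) =
      ((if n = m then s m * s l * s m ^ 2 / (t m - t l) ^ 2 else 0)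
      + (if n = l then s m * s l * s l ^ 2 / (t m - t l) ^ 2 else 0))
      - (s m * s l / (t m - t l) * (s n ^ 2 / (t m - t n))
        - s m * s l / (t m - t l) * (s n ^ 2 / (t l - t n))) := by
    intro n
    by_cases h1 : n = m
    · subst h1
      have : t l - t n ≠ 0 := sub_ne_zero.2 (ht.ne hml.symm)
      simp only [hml, sub_self, div_zero, if_true, if_false]
      field_simp
      ring
    by_cases h2 : n = l
    · subst h2
      simp only [h1, sub_self, div_zero, if_true, if_false]
      field_simp
      ring
    have h3 : t n - t m ≠ 0 := sub_ne_zero.2 (ht.ne h1)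
    have h4 : t n - t l ≠ 0 := sub_ne_zero.2 (ht.ne h2)
    have h5 : t m - t n ≠ 0 := sub_ne_zero.2 (ht.ne (Ne.symm h1))
    have h6 : t l - t n ≠ 0 := sub_ne_zero.2 (ht.ne (Ne.symm h2))
    simp only [h1, h2, if_false]
    field_simp
    ring
  rw [sum_congr rfl fun n _ => key n]
  simp only [sum_sub_distrib, sum_add_distrib, sum_ite_eq', mem_univ, if_true, mul_sum, mul_sub]
  ring

theorem sum_norm_sq_weighted_hilbert_le {ι : Type*} [Fintype ι] {t s : ι → ℝ}
    (ht : Function.Injective t) (hs : ∀ i, 0 ≤ s i) {Q : ℝ}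
    (hQ : ∀ m, ∑ n, (s m ^ 2 + s n ^ 2) ^ 2 / (t m - t n) ^ 2 ≤ Q) (x : ι → ℂ) :
    ∑ n, ‖∑ m, ((s n * s m / (t n - t m) : ℝ) : ℂ) * x m‖ ^ 2 ≤ Q * ∑ m, ‖x m‖ ^ 2 := by
  classical
  set A : ι → ι → ℝ := fun n m => s n * s m / (t n - t m) with hA
  have hAs : ∀ n m, A m n = - A n m := by
    intro n m
    simp only [hA]
    rw [← neg_sub (t n), div_neg, mul_comm (s m)]
  set B : Matrix ι ι ℂ := Matrix.of fun n m => Complex.I * (A n m : ℂ) with hBdef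
  have hB : B.IsHermitian := by
    ext n m
    simp [hBdef, hAs n m]
  have hBx : ∀ (y : ι → ℂ) n, B.mulVec y n = Complex.I * ∑ m, (A n m : ℂ) * y m := by
    intro y n
    simp [hBdef, Matrix.mulVec, dotProduct, mul_sum, mul_assoc]
  have main := hB.sum_norm_sq_mulVec_le (Q := Q) ?_ x
  · simpa only [hBx, norm_mul, Complex.norm_I, one_mul] using main
  intro μ v hv
  have hAv : ∀ n, ∑ m, (A n m : ℂ) * v m = -Complex.I * μ * v n := by
    intro n
    have := congrFun hv n
    rw [hBx, Pi.smul_apply, smul_eq_mul] at this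
    linear_combination (-Complex.I) * this + (∑ m, (A n m : ℂ) * v m) * Complex.I_sq
  set S : ι → ℝ := fun m => ∑ n, s n ^ 2 / (t m - t n)
  set R : ι → ι → ℝ := fun m l => if m = l then ∑ n, A n m ^ 2 else
    s m * s l * (s m ^ 2 + s l ^ 2) / (t m - t l) ^ 2 with hR
  have hG : ∀ m l, ∑ n, A n m * A n l = R m l - A m l * (S m - S l) := by
    intro m l
    by_cases hml : m = l
    · subst hml
      simp [hR, sq]
    · simp only [hR, hml, if_false]
      exact sum_weighted_hilbert_mul ht s hml
  have hR0 : ∀ m l, 0 ≤ R m l := by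
    intro m l
    have := hs m
    have := hs l
    simp only [hR]
    split_ifs <;> positivity
  have hRs : ∀ m l, R m l = R l m := by
    intro m l
    by_cases hml : m = l
    · rw [hml]
    · simp only [hR, hml, Ne.symm hml, if_false]
      rw [← neg_sub (t m), neg_sq]
      ring
  have hRQ : ∀ m, ∑ l, R m l ≤ Q := by
    intro m
    have h1 : ∀ l, R m l ≤ (if m = l then ∑ n, A n m ^ 2 else 0)
        + (s m ^ 2 + s l ^ 2) ^ 2 / (t m - t l) ^ 2 / 2 := by
      intro l
      by_cases hml : m = l
      · simp only [hR, hml, if_true, le_add_iff_nonneg_right]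
        positivity
      · simp only [hR, hml, if_false, zero_add]
        rw [div_div, mul_comm _ (2 : ℝ), ← div_div]
        refine div_le_div_of_nonneg_right ?_ (sq_nonneg _)
        nlinarith [sq_nonneg (s m - s l), sq_nonneg (s m), sq_nonneg (s l),
          mul_nonneg (add_nonneg (sq_nonneg (s m)) (sq_nonneg (s l))) (sq_nonneg (s m - s l))]
    have h2 : ∑ n, A n m ^ 2 ≤ ∑ n, (s m ^ 2 + s n ^ 2) ^ 2 / (t m - t n) ^ 2 / 2 := by
      refine sum_le_sum fun n _ => ?_
      simp only [hA]
      rw [div_pow, ← neg_sub (t m), neg_sq, div_div, mul_comm _ (2 : ℝ), ← div_div]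
      refine div_le_div_of_nonneg_right ?_ (sq_nonneg _)
      nlinarith [sq_nonneg (s m ^ 2 - s n ^ 2), sq_nonneg (s m * s n)]
    have h3 := sum_le_sum fun l (_ : l ∈ univ) => h1 l
    have h4 := hQ m
    simp only [sum_add_distrib, sum_ite_eq, mem_univ, if_true] at h3
    rw [← sum_div] at h2 h3
    linarith
  have e1 : ((μ ^ 2 * ∑ i, ‖v i‖ ^ 2 : ℝ) : ℂ) =
      ∑ n, (∑ m, (A n m : ℂ) * v m) * (starRingEnd ℂ) (∑ l, (A n l : ℂ) * v l) := by
    simp only [hAv]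
    push_cast
    rw [mul_sum]
    refine sum_congr rfl fun n _ => ?_
    rw [← Complex.mul_conj']
    simp only [map_mul, map_neg, Complex.conj_I, Complex.conj_ofReal]
    linear_combination ((μ : ℂ) ^ 2 * (v n * (starRingEnd ℂ) (v n))) * Complex.I_sq
  have e2 : ∑ n, (∑ m, (A n m : ℂ) * v m) * (starRingEnd ℂ) (∑ l, (A n l : ℂ) * v l) =
      ∑ m, ∑ l, ((∑ n, A n m * A n l : ℝ) : ℂ) * (v m * (starRingEnd ℂ) (v l)) := by
    simp only [map_sum, map_mul, Complex.conj_ofReal, Complex.ofReal_sum, sum_mul]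
    rw [sum_comm]
    refine sum_congr rfl fun m _ => ?_
    simp only [mul_sum]
    rw [sum_comm]
    refine sum_congr rfl fun l _ => sum_congr rfl fun n _ => ?_
    push_cast
    ring
  have e3 : ∑ m, ∑ l, ((A m l * S m : ℝ) : ℂ) * (v m * (starRingEnd ℂ) (v l)) =
      ∑ m, Complex.I * μ * S m * (v m * (starRingEnd ℂ) (v m)) := by
    refine sum_congr rfl fun m _ => ?_
    have := congrArg (starRingEnd ℂ) (hAv m)
    simp only [map_sum, map_mul, map_neg, Complex.conj_I, Complex.conj_ofReal, neg_neg] at this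
    calc _ = S m * v m * ∑ l, (A m l : ℂ) * (starRingEnd ℂ) (v l) := by
          rw [mul_sum]
          refine sum_congr rfl fun l _ => ?_
          push_cast
          ring
      _ = _ := by rw [this]; ring
  have e4 : ∑ m, ∑ l, ((A m l * S l : ℝ) : ℂ) * (v m * (starRingEnd ℂ) (v l)) =
      ∑ m, Complex.I * μ * S m * (v m * (starRingEnd ℂ) (v m)) := by
    rw [sum_comm]
    refine sum_congr rfl fun l _ => ?_
    calc _ = -(S l * (starRingEnd ℂ) (v l) * ∑ m, (A l m : ℂ) * v m) := by
          rw [mul_sum, ← sum_neg_distrib]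
          refine sum_congr rfl fun m _ => ?_
          rw [hAs l m]
          push_cast
          ring
      _ = _ := by rw [hAv]; ring
  have e5 : ((μ ^ 2 * ∑ i, ‖v i‖ ^ 2 : ℝ) : ℂ) =
      ∑ m, ∑ l, (R m l : ℂ) * (v m * (starRingEnd ℂ) (v l)) := by
    rw [e1, e2]
    have : ∀ m l, ((∑ n, A n m * A n l : ℝ) : ℂ) * (v m * (starRingEnd ℂ) (v l)) =
        (R m l : ℂ) * (v m * (starRingEnd ℂ) (v l))
        - ((A m l * S m : ℝ) : ℂ) * (v m * (starRingEnd ℂ) (v l))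
        + ((A m l * S l : ℝ) : ℂ) * (v m * (starRingEnd ℂ) (v l)) := by
      intro m l
      rw [hG]
      push_cast
      ring
    simp only [this, sum_add_distrib, sum_sub_distrib]
    rw [e3, e4]
    ring
  refine le_trans ?_ (sum_mul_norm_mul_norm_le hR0 hRs hRQ v)
  calc μ ^ 2 * ∑ i, ‖v i‖ ^ 2 ≤ ‖((μ ^ 2 * ∑ i, ‖v i‖ ^ 2 : ℝ) : ℂ)‖ := by
        rw [Complex.norm_real]; exact le_abs_self _
    _ ≤ _ := by
        rw [e5]
        refine (norm_sum_le _ _).trans (sum_le_sum fun m _ => (norm_sum_le _ _).trans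
          (sum_le_sum fun l _ => ?_))
        rw [norm_mul, norm_mul, Complex.norm_real, Complex.norm_conj, Real.norm_eq_abs,
          abs_of_nonneg (hR0 m l)]

theorem sum_inv_max_mul_inv_sqrt_le (n N : ℕ) :
    ∑ m ∈ range N, 1 / (max (n : ℝ) m + 1) * (1 / √(m + 1)) ≤ 4 / √(n + 1) := by
  have hstep : ∀ m : ℕ, 1 / √((m : ℝ) + 1) ≤ 2 * (√((m : ℝ) + 1) - √m) := by
    intro m
    have h1 : 0 < √((m : ℝ) + 1) := Real.sqrt_pos.2 (by positivity)
    have h2 := Real.sq_sqrt (show (0 : ℝ) ≤ m + 1 by positivity)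
    have h3 := Real.sq_sqrt (show (0 : ℝ) ≤ m by positivity)
    rw [div_le_iff₀ h1]
    nlinarith [sq_nonneg (√((m : ℝ) + 1) - √m)]
  have hstep' : ∀ m : ℕ, 0 < m → 1 / ((m : ℝ) + 1) * (1 / √((m : ℝ) + 1)) ≤
      2 / √m - 2 / √((m : ℝ) + 1) := by
    intro m hm
    have h0 : (0 : ℝ) < m := by exact_mod_cast hm
    have h1 : 0 < √((m : ℝ) + 1) := Real.sqrt_pos.2 (by positivity)
    have h1' : 0 < √(m : ℝ) := Real.sqrt_pos.2 h0
    have h2 := Real.sq_sqrt (show (0 : ℝ) ≤ m + 1 by positivity)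
    have h3 := Real.sq_sqrt h0.le
    have h4 : √(m : ℝ) ≤ √((m : ℝ) + 1) := Real.sqrt_le_sqrt (by linarith)
    generalize √((m : ℝ) + 1) = a at *
    generalize √(m : ℝ) = b at *
    rw [← h2, div_sub_div _ _ h1'.ne' h1.ne', div_mul_div_comm, div_le_div_iff₀ (by positivity)
      (by positivity)]
    have : b ≤ (2 * a - b * 2) * a ^ 2 := by
      nlinarith [mul_nonneg (sub_nonneg.2 h4) h1.le, mul_nonneg (sub_nonneg.2 h4) h1'.le,
        mul_nonneg (mul_nonneg (sub_nonneg.2 h4) h1.le) (sub_nonneg.2 h4)]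
    nlinarith
  have hsmall : ∀ N ≤ n + 1, ∑ m ∈ range N, 1 / (max (n : ℝ) m + 1) * (1 / √(m + 1)) ≤
      2 * √N / (n + 1) := by
    intro N
    induction N with
    | zero => simp
    | succ k ih =>
      intro hk
      have hkn : (k : ℝ) ≤ n := by exact_mod_cast Nat.le_of_succ_le_succ hk
      rw [sum_range_succ, max_eq_left hkn]
      have h1 := ih (by omega)
      have h2 := div_le_div_of_nonneg_right (hstep k) (show (0 : ℝ) ≤ n + 1 by positivity)
      push_cast
      calc _ ≤ 2 * √k / (n + 1) + 2 * (√((k : ℝ) + 1) - √k) / (n + 1) := by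
            refine add_le_add h1 (le_trans (le_of_eq ?_) h2)
            ring
        _ = _ := by ring
  have hn : 2 * √((n : ℝ) + 1) / (n + 1) = 4 / √((n : ℝ) + 1) - 2 / √((n : ℝ) + 1) := by
    have h1 : 0 < √((n : ℝ) + 1) := Real.sqrt_pos.2 (by positivity)
    have h2 := Real.sq_sqrt (show (0 : ℝ) ≤ n + 1 by positivity)
    generalize √((n : ℝ) + 1) = a at *
    rw [← h2]
    field_simp
    norm_num
  have hlarge : ∀ N, n + 1 ≤ N → ∑ m ∈ range N, 1 / (max (n : ℝ) m + 1) * (1 / √(m + 1)) ≤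
      4 / √(n + 1) - 2 / √N := by
    intro N hN
    induction N, hN using Nat.le_induction with
    | base =>
      have := hsmall (n + 1) le_rfl
      push_cast at this ⊢
      linarith
    | succ k hk ih =>
      have hkn : (n : ℝ) ≤ k := by exact_mod_cast (by omega : n ≤ k)
      rw [sum_range_succ, max_eq_right hkn]
      have := hstep' k (by omega)
      push_cast
      linarith
  have hnn : (0 : ℝ) ≤ 2 / √((n : ℝ) + 1) := by positivity
  rcases le_total N (n + 1) with h | h
  · refine (hsmall N h).trans ?_
    have h1 : √(N : ℝ) ≤ √((n : ℝ) + 1) := Real.sqrt_le_sqrt (by exact_mod_cast h)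
    have h2 : 2 * √(N : ℝ) / (n + 1) ≤ 2 * √((n : ℝ) + 1) / (n + 1) := by gcongr
    linarith
  · have h1 := hlarge N h
    have : (0 : ℝ) ≤ 2 / √N := by positivity
    linarith

theorem sum_sq_sum_inv_max_mul_le (N : ℕ) (y : ℕ → ℝ) :
    ∑ n ∈ range N, (∑ m ∈ range N, 1 / (max (n : ℝ) m + 1) * y m) ^ 2 ≤
      16 * ∑ m ∈ range N, y m ^ 2 := by
  have hp : ∀ m : ℕ, 0 < √((m : ℝ) + 1) := fun m => Real.sqrt_pos.2 (by positivity)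
  have h1 : ∀ n : ℕ, (∑ m ∈ range N, 1 / (max (n : ℝ) m + 1) * y m) ^ 2 ≤
      4 / √(n + 1) * ∑ m ∈ range N, 1 / (max (n : ℝ) m + 1) * √(m + 1) * y m ^ 2 := by
    intro n
    refine (sum_sq_le_sum_mul_sum_of_sq_le_mul (range N)
      (f := fun m : ℕ => 1 / (max (n : ℝ) m + 1) * (1 / √(m + 1)))
      (g := fun m : ℕ => 1 / (max (n : ℝ) m + 1) * √(m + 1) * y m ^ 2)
      (fun m _ => by positivity) (fun m _ => by positivity) fun m _ => le_of_eq ?_).trans ?_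
    · have := hp m
      field_simp
    · exact mul_le_mul_of_nonneg_right (sum_inv_max_mul_inv_sqrt_le n N)
        (sum_nonneg fun m _ => by positivity)
  refine (sum_le_sum fun n _ => h1 n).trans ?_
  simp only [mul_sum]
  rw [sum_comm]
  refine sum_le_sum fun m _ => ?_
  calc _ = (4 * √(m + 1) * y m ^ 2) *
        ∑ n ∈ range N, 1 / (max (m : ℝ) n + 1) * (1 / √(n + 1)) := by
        rw [mul_sum]
        refine sum_congr rfl fun n _ => ?_
        rw [max_comm]
        ring
    _ ≤ (4 * √(m + 1) * y m ^ 2) * (4 / √(m + 1)) :=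
        mul_le_mul_of_nonneg_left (sum_inv_max_mul_inv_sqrt_le m N) (by positivity)
    _ = _ := by
        have := hp m
        field_simp
        ring

theorem summable_inv_int_sq : Summable fun k : ℤ => 1 / (k : ℝ) ^ 2 :=
  Real.summable_one_div_int_pow.2 one_lt_two

theorem summable_inv_nat_sub_sq (n : ℕ) : Summable fun m : ℕ => 1 / ((n : ℝ) - m) ^ 2 := by
  have hi : Function.Injective fun m : ℕ => (n : ℤ) - m := fun a b h => by
    simpa using h
  simpa [Function.comp_def] using summable_inv_int_sq.comp_injective hi

theorem tsum_inv_nat_sub_sq_le (n : ℕ) :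
    ∑' m : ℕ, 1 / ((n : ℝ) - m) ^ 2 ≤ ∑' k : ℤ, 1 / (k : ℝ) ^ 2 := by
  have hi : Function.Injective fun m : ℕ => (n : ℤ) - m := fun a b h => by
    simpa using h
  refine Summable.tsum_le_tsum_of_inj _ hi (fun _ _ => by positivity) (fun m => ?_)
    (summable_inv_nat_sub_sq n) summable_inv_int_sq
  simp

theorem mul_rpow_mul_sub_le_of_gap {β c : ℝ} (hβ : 0 < β) (hc : 0 < c) {t : ℕ → ℝ}
    (hgap : ∀ k : ℕ, 1 ≤ k → t (k + 1) - t k ≥ c * (k : ℝ) ^ β) {n m : ℕ} (hnm : n ≤ m) :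
    c / (2 * 2 ^ β) * ((m : ℝ) + 1) ^ β * ((m : ℝ) - n) ≤ t (m + 1) - t (n + 1) := by
  obtain ⟨d, rfl⟩ := Nat.exists_eq_add_of_le hnm
  have h1 : t (n + d + 1) - t (n + 1) = ∑ i ∈ range d, (t (n + 1 + i + 1) - t (n + 1 + i)) := by
    have := sum_range_sub (fun i => t (n + 1 + i)) d
    simp only [← add_assoc, add_zero] at this
    rw [this]
    congr 2
    ring
  have h2 : c * ∑ i ∈ range d, ((n : ℝ) + 1 + i) ^ β ≤ t (n + d + 1) - t (n + 1) := by
    rw [h1, mul_sum]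
    refine sum_le_sum fun i _ => ?_
    have := hgap (n + 1 + i) (by omega)
    push_cast at this
    exact this
  have h3 : (d : ℝ) * (((n + d : ℝ) + 1) / 2) ^ β ≤
      2 * ∑ i ∈ range d, ((n : ℝ) + 1 + i) ^ β := by
    have hr := sum_range_reflect (fun i : ℕ => ((n : ℝ) + 1 + i) ^ β) d
    rw [two_mul]
    nth_rewrite 1 [← hr]
    rw [← sum_add_distrib, ← nsmul_eq_mul, ← card_range d, ← sum_const, card_range]
    refine sum_le_sum fun i hi => ?_
    have hid : i < d := mem_range.1 hi
    have hcast : ((d - 1 - i : ℕ) : ℝ) = d - 1 - i := by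
      rw [Nat.cast_sub (by omega), Nat.cast_sub (by omega)]; simp
    rw [hcast]
    have hid' : (i : ℝ) + 1 ≤ d := by exact_mod_cast hid
    have hn0 : (0 : ℝ) ≤ n := Nat.cast_nonneg n
    have hi0 : (0 : ℝ) ≤ i := Nat.cast_nonneg i
    have hd0 : (0 : ℝ) ≤ d := Nat.cast_nonneg d
    rcases le_total ((n + d + 1 : ℝ) / 2) (n + 1 + i) with h | h
    · exact (Real.rpow_le_rpow (by positivity) h hβ.le).trans
        (le_add_of_nonneg_left (Real.rpow_nonneg (by linarith) _))
    · exact (Real.rpow_le_rpow (by positivity) (by linarith) hβ.le).trans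
        (le_add_of_nonneg_right (by positivity))
  rw [Real.div_rpow (by positivity) (by positivity)] at h3
  refine le_trans ?_ h2
  have h4 := mul_le_mul_of_nonneg_left h3 (half_pos hc).le
  push_cast
  refine le_trans (le_of_eq ?_) (h4.trans (le_of_eq ?_))
  · field_simp
    ring
  · ring

theorem rpow_sub_rpow_le_max_mul {β x y : ℝ} (hx : 0 < x) (hxy : x ≤ y) :
    y ^ β - x ^ β ≤ max 1 β * y ^ β * ((y - x) / y) := by
  have hy : 0 < y := hx.trans_le hxy
  have hr : x / y ≤ 1 := (div_le_one hy).2 hxy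
  have hr0 : 0 < x / y := by positivity
  have key : 1 - (x / y) ^ β ≤ max 1 β * (1 - x / y) := by
    rcases le_total β 1 with h | h
    · rw [max_eq_left h]
      have := Real.rpow_le_rpow_of_exponent_ge hr0 hr h
      rw [Real.rpow_one] at this
      linarith
    · rw [max_eq_right h]
      have := one_add_mul_self_le_rpow_one_add (s := x / y - 1) (by linarith) h
      rw [add_sub_cancel] at this
      linarith
  rw [Real.div_rpow hx.le hy.le] at key
  have hyb : 0 < y ^ β := by positivity
  have := mul_le_mul_of_nonneg_left key hyb.le
  calc _ = y ^ β * (1 - x ^ β / y ^ β) := by field_simp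
    _ ≤ _ := this
    _ = _ := by field_simp

theorem sum_range_norm_sq_hilbert_le {τ w : ℕ → ℝ} (hτ : Function.Injective τ)
    (hw : ∀ m, 0 < w m) {κ B : ℝ} (hκ : 0 < κ) (hB : 0 ≤ B)
    (hgap : ∀ n m : ℕ, κ * max (w n) (w m) * |(n : ℝ) - m| ≤ |τ n - τ m|)
    (hreg : ∀ n m : ℕ,
      |w m - w n| ≤ B * max (w n) (w m) * (|(n : ℝ) - m| / (max (n : ℝ) m + 1)))
    (N : ℕ) (x : ℕ → ℂ) :
    ∑ n ∈ range N, ‖∑ m ∈ range N, ((w m / (τ m - τ n) : ℝ) : ℂ) * x m‖ ^ 2 ≤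
      (2 * (4 / κ ^ 2 * ∑' k : ℤ, 1 / (k : ℝ) ^ 2) + 2 * (16 * (B / κ) ^ 2)) *
        ∑ m ∈ range N, ‖x m‖ ^ 2 := by
  set Q : ℝ := 4 / κ ^ 2 * ∑' k : ℤ, 1 / (k : ℝ) ^ 2
  set s : ℕ → ℝ := fun m => √(w m)
  have hs : ∀ m, s m ^ 2 = w m := fun m => Real.sq_sqrt (hw m).le
  have hs0 : ∀ m, 0 ≤ s m := fun m => Real.sqrt_nonneg _
  have hterm : ∀ n m : ℕ, (s n ^ 2 + s m ^ 2) ^ 2 / (τ n - τ m) ^ 2 ≤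
      4 / κ ^ 2 * (1 / ((n : ℝ) - m) ^ 2) := by
    intro n m
    rcases eq_or_ne n m with rfl | hnm
    · simp
    have h1 : 0 < (τ n - τ m) ^ 2 := by
      have := sub_ne_zero.2 (hτ.ne hnm)
      positivity
    have h2 : 0 < ((n : ℝ) - m) ^ 2 := by
      have : (n : ℝ) - m ≠ 0 := sub_ne_zero.2 (by exact_mod_cast hnm)
      positivity
    rw [div_mul_div_comm, mul_one, div_le_div_iff₀ h1 (by positivity), hs, hs]
    have h3 : κ * (w n + w m) * |(n : ℝ) - m| ≤ 2 * |τ n - τ m| := by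
      have : w n + w m ≤ 2 * max (w n) (w m) := by
        linarith [le_max_left (w n) (w m), le_max_right (w n) (w m)]
      calc _ ≤ κ * (2 * max (w n) (w m)) * |(n : ℝ) - m| := by gcongr
        _ = 2 * (κ * max (w n) (w m) * |(n : ℝ) - m|) := by ring
        _ ≤ _ := by linarith [hgap n m]
    have h4 := pow_le_pow_left₀
      (by have := hw n; have := hw m; positivity) h3 2
    simp only [mul_pow, sq_abs] at h4
    linarith
  have hrow : ∀ n : ℕ, ∑ m ∈ range N, (s n ^ 2 + s m ^ 2) ^ 2 / (τ n - τ m) ^ 2 ≤ Q := by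
    intro n
    refine (sum_le_sum fun m _ => hterm n m).trans ?_
    rw [← mul_sum]
    refine mul_le_mul_of_nonneg_left ?_ (by positivity)
    exact ((summable_inv_nat_sub_sq n).sum_le_tsum _ fun _ _ => by positivity).trans
      (tsum_inv_nat_sub_sq_le n)
  have hmain : ∑ n ∈ range N, ‖∑ m ∈ range N, ((s n * s m / (τ n - τ m) : ℝ) : ℂ) * x m‖ ^ 2 ≤
      Q * ∑ m ∈ range N, ‖x m‖ ^ 2 := by
    simp only [sum_range]
    refine sum_norm_sq_weighted_hilbert_le (t := fun i : Fin N => τ i) (s := fun i : Fin N => s i)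
      (hτ.comp Fin.val_injective) (fun i => hs0 i) (fun i => ?_) (fun i : Fin N => x i)
    have := hrow i
    rwa [sum_range] at this
  have hD : ∀ n m : ℕ, |(w m - s n * s m) / (τ m - τ n)| ≤
      B / κ * (1 / (max (n : ℝ) m + 1)) := by
    intro n m
    rcases eq_or_ne n m with rfl | hnm
    · simp only [sub_self, div_zero, abs_zero]
      positivity
    have h1 : 0 < |τ n - τ m| := abs_pos.2 (sub_ne_zero.2 (hτ.ne hnm))
    have h2 : |w m - s n * s m| ≤ |w m - w n| := by
      have e1 : w m - s n * s m = (s m - s n) * s m := by rw [← hs m]; ring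
      have e2 : w m - w n = (s m - s n) * (s m + s n) := by rw [← hs m, ← hs n]; ring
      rw [e1, e2, abs_mul, abs_mul, abs_of_nonneg (hs0 m),
        abs_of_nonneg (add_nonneg (hs0 m) (hs0 n))]
      exact mul_le_mul_of_nonneg_left (by linarith [hs0 n]) (abs_nonneg _)
    rw [abs_div, abs_sub_comm (τ m), div_le_iff₀ h1]
    calc _ ≤ B * max (w n) (w m) * (|(n : ℝ) - m| / (max (n : ℝ) m + 1)) := h2.trans (hreg n m)
      _ = B / κ * (1 / (max (n : ℝ) m + 1)) * (κ * max (w n) (w m) * |(n : ℝ) - m|) := by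
          field_simp
      _ ≤ _ := mul_le_mul_of_nonneg_left (hgap n m) (by positivity)
  have herr : ∑ n ∈ range N,
      ‖∑ m ∈ range N, (((w m - s n * s m) / (τ m - τ n) : ℝ) : ℂ) * x m‖ ^ 2 ≤
      16 * (B / κ) ^ 2 * ∑ m ∈ range N, ‖x m‖ ^ 2 := by
    have h1 := mul_le_mul_of_nonneg_left (sum_sq_sum_inv_max_mul_le N fun m => ‖x m‖)
      (sq_nonneg (B / κ))
    rw [mul_sum] at h1
    refine (sum_le_sum fun n _ => ?_).trans (h1.trans (le_of_eq (by ring)))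
    rw [← mul_pow]
    refine pow_le_pow_left₀ (norm_nonneg _) ?_ 2
    rw [mul_sum]
    refine (norm_sum_le _ _).trans (sum_le_sum fun m _ => ?_)
    rw [norm_mul, Complex.norm_real, Real.norm_eq_abs, ← mul_assoc]
    exact mul_le_mul_of_nonneg_right (hD n m) (norm_nonneg _)
  have hsplit : ∀ n : ℕ, ∑ m ∈ range N, ((w m / (τ m - τ n) : ℝ) : ℂ) * x m =
      (∑ m ∈ range N, (((w m - s n * s m) / (τ m - τ n) : ℝ) : ℂ) * x m)
      - ∑ m ∈ range N, ((s n * s m / (τ n - τ m) : ℝ) : ℂ) * x m := by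
    intro n
    rw [← sum_sub_distrib]
    refine sum_congr rfl fun m _ => ?_
    rw [← sub_mul, ← Complex.ofReal_sub, ← neg_sub (τ m) (τ n), div_neg, sub_neg_eq_add,
      ← add_div, sub_add_cancel]
  have hsq : ∀ a b : ℂ, ‖a - b‖ ^ 2 ≤ 2 * ‖a‖ ^ 2 + 2 * ‖b‖ ^ 2 := by
    intro a b
    have h1 := pow_le_pow_left₀ (norm_nonneg _) (norm_sub_le a b) 2
    nlinarith [sq_nonneg (‖a‖ - ‖b‖)]
  simp only [hsplit]
  refine (sum_le_sum fun n _ => hsq _ _).trans ?_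
  rw [sum_add_distrib, ← mul_sum, ← mul_sum]
  linarith

/-- STATEMENT 7: weighted discrete Hilbert transform bound, `α > 1`.
If `t` is strictly increasing with `t_{k+1} - t_k ≥ c k^{α-1}` for `k ≥ 1`, then there is
`C̃ > 0` (depending only on α and c) with
`Σ_n |Σ_{m≠n} m^{α-1} b_m/(t_m - t_n)|² ≤ C̃ Σ_m |b_m|²` for every `b ∈ ℓ²`.
(Sequences are indexed by positive integers; here index `k : ℕ` stands for `k+1`.) -/
theorem stmt8 (α c : ℝ) (hα : 1 < α) (hc : 0 < c) :
    ∃ C : ℝ, 0 < C ∧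
      ∀ t : ℕ → ℝ, StrictMono t →
        (∀ k : ℕ, 1 ≤ k → t (k + 1) - t k ≥ c * (k : ℝ) ^ (α - 1)) →
        ∀ b : ℕ → ℂ, Summable (fun m => ‖b m‖ ^ 2) →
          ∑' n : ℕ, ‖∑' m : {m : ℕ // m ≠ n},
              (((((m : ℕ) : ℝ) + 1) ^ (α - 1) : ℝ) : ℂ) * b m
                / ((t ((m : ℕ) + 1) : ℂ) - (t (n + 1) : ℂ))‖ ^ 2
            ≤ C * ∑' m : ℕ, ‖b m‖ ^ 2 := by
  have hβ : 0 < α - 1 := by linarith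
  generalize α - 1 = β at hβ ⊢
  set κ : ℝ := c / (2 * 2 ^ β)
  have hκ : 0 < κ := by positivity
  set Z : ℝ := ∑' k : ℤ, 1 / (k : ℝ) ^ 2
  have hZ0 : 0 ≤ Z := tsum_nonneg fun _ => by positivity
  set B : ℝ := max 1 β
  have hB : 0 < B := lt_max_of_lt_left one_pos
  refine ⟨2 * (4 / κ ^ 2 * Z) + 2 * (16 * (B / κ) ^ 2), by positivity, ?_⟩
  intro t ht hgap b hb
  set w : ℕ → ℝ := fun m => ((m : ℝ) + 1) ^ β with hwdef
  set τ : ℕ → ℝ := fun m => t (m + 1) with hτdef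
  have hτ : Function.Injective τ := fun i j h => by simpa using ht.injective h
  have hw : ∀ m, 0 < w m := fun m => by positivity
  have hwm : Monotone w := fun n m h =>
    Real.rpow_le_rpow (by positivity) (by simpa using h) hβ.le
  have hgap' : ∀ n m : ℕ, κ * max (w n) (w m) * |(n : ℝ) - m| ≤ |τ n - τ m| := by
    have key : ∀ n m : ℕ, n ≤ m → κ * max (w n) (w m) * |(n : ℝ) - m| ≤ |τ n - τ m| := by
      intro n m h
      have h' : (n : ℝ) ≤ m := by exact_mod_cast h
      rw [max_eq_right (hwm h), abs_sub_comm, abs_sub_comm (τ n), abs_of_nonneg (sub_nonneg.2 h')]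
      exact (mul_rpow_mul_sub_le_of_gap hβ hc hgap h).trans (le_abs_self _)
    intro n m
    rcases le_total n m with h | h
    · exact key n m h
    · rw [max_comm, abs_sub_comm, abs_sub_comm (τ n)]
      exact key m n h
  have hreg : ∀ n m : ℕ,
      |w m - w n| ≤ B * max (w n) (w m) * (|(n : ℝ) - m| / (max (n : ℝ) m + 1)) := by
    have key : ∀ n m : ℕ, n ≤ m →
        |w m - w n| ≤ B * max (w n) (w m) * (|(n : ℝ) - m| / (max (n : ℝ) m + 1)) := by
      intro n m h
      have h' : (n : ℝ) ≤ m := by exact_mod_cast h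
      rw [max_eq_right (hwm h), max_eq_right h', abs_sub_comm (n : ℝ),
        abs_of_nonneg (sub_nonneg.2 h'), abs_of_nonneg (sub_nonneg.2 (hwm h))]
      have := rpow_sub_rpow_le_max_mul (β := β) (x := (n : ℝ) + 1) (y := (m : ℝ) + 1)
        (by positivity) (by linarith)
      rwa [add_sub_add_right_eq_sub] at this
    intro n m
    rcases le_total n m with h | h
    · exact key n m h
    · rw [max_comm, max_comm (n : ℝ), abs_sub_comm, abs_sub_comm (n : ℝ)]
      exact key m n h
  have hfin := sum_range_norm_sq_hilbert_le hτ hw hκ hB.le hgap' hreg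
  set T : ℕ → ℕ → ℂ := fun n m => ((w m / (τ m - τ n) : ℝ) : ℂ) * b m with hT
  have hinner : ∀ n : ℕ, ∑' m : {m : ℕ // m ≠ n},
      (((((m : ℕ) : ℝ) + 1) ^ β : ℝ) : ℂ) * b m
        / ((t ((m : ℕ) + 1) : ℂ) - (t (n + 1) : ℂ)) = ∑' m, T n m := by
    intro n
    have hsupp : Function.support (T n) ⊆ {m | m ≠ n} := by
      intro m hm h
      apply hm
      simp [hT, h]
    rw [← tsum_subtype_eq_of_support_subset hsupp]
    refine tsum_congr fun m => ?_
    simp only [hT, hwdef, hτdef]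
    push_cast
    ring
  have hsum : ∀ n, Summable (T n) := by
    intro n
    refine Summable.of_norm_bounded
      (((summable_inv_nat_sub_sq n).mul_left (1 / κ ^ 2)).add hb) fun m => ?_
    have h1 : |w m / (τ m - τ n)| ^ 2 ≤ 1 / κ ^ 2 * (1 / ((n : ℝ) - m) ^ 2) := by
      rcases eq_or_ne n m with rfl | hnm
      · simp
      have h2 : 0 < |τ n - τ m| := abs_pos.2 (sub_ne_zero.2 (hτ.ne hnm))
      have h3 : 0 < |(n : ℝ) - m| := abs_pos.2 (sub_ne_zero.2 (by exact_mod_cast hnm))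
      have h4 : |w m / (τ m - τ n)| ≤ 1 / (κ * |(n : ℝ) - m|) := by
        rw [abs_div, abs_of_pos (hw m), abs_sub_comm, div_le_div_iff₀ h2 (by positivity), one_mul]
        refine le_trans ?_ (hgap' n m)
        calc w m * (κ * |(n : ℝ) - m|) = κ * w m * |(n : ℝ) - m| := by ring
          _ ≤ _ := by gcongr; exact le_max_right _ _
      refine (pow_le_pow_left₀ (abs_nonneg _) h4 2).trans (le_of_eq ?_)
      rw [div_pow, mul_pow, sq_abs, one_pow, div_mul_div_comm, mul_one]
    rw [norm_mul, Complex.norm_real, Real.norm_eq_abs]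
    nlinarith [sq_nonneg (|w m / (τ m - τ n)| - ‖b m‖), sq_nonneg (|w m / (τ m - τ n)|),
      sq_nonneg ‖b m‖]
  simp only [hinner]
  refine Real.tsum_le_of_sum_range_le (fun n => by positivity) fun N => ?_
  have hlim : Filter.Tendsto (fun M => ∑ n ∈ range N, ‖∑ m ∈ range M, T n m‖ ^ 2) Filter.atTop
      (nhds (∑ n ∈ range N, ‖∑' m, T n m‖ ^ 2)) :=
    tendsto_finsetSum _ fun n _ => ((hsum n).hasSum.tendsto_sum_nat.norm).pow 2
  refine le_of_tendsto hlim ?_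
  filter_upwards [Filter.eventually_ge_atTop N] with M hM
  refine (sum_le_sum_of_subset_of_nonneg (range_subset_range.2 hM)
    fun _ _ _ => by positivity).trans ((hfin M b).trans ?_)
  exact mul_le_mul_of_nonneg_left (hb.sum_le_tsum _ fun _ _ => by positivity) (by positivity)
end
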